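/- Let e1,…,e6 be linearly independent vectors in ℝ^6 whose Gram matrix (⟪e_i,e_j⟫) equals 2·G, where G is the matrix with rows (2,−1,0,0,0,0), (−1,2,−1,0,0,0), (0,−1,2,−1,0,−1), (0,0,−1,2,−1,0), (0,0,0,−1,2,0), (0,0,−1,0,0,2), and let Λ6 be the ℤ-span of e1,…,e6. Then the quotient group Λ6♯/Λ6 has exactly 192 elements, consisting of: the zero coset; exactly 54 cosets of minimal norm 2/3, each of order 6; exactly 36 cosets of minimal norm 1, each of order 2; exactly 72 cosets of minimal norm 5/3, each of order 6; exactly 27 cosets of minimal norm 2, each of order 2; and exactly 2 cosets of minimal norm 8/3, each of order 3. Here the minimal norm of a coset is the minimum of ‖x‖² over x in the coset. -/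

import Mathlib

noncomputable section

open scoped RealInnerProductSpace

/-- `ℝ^n` with the standard inner product. -/
abbrev E (n : ℕ) := EuclideanSpace ℝ (Fin n)

/-- The standard basis vector `ε i`. -/
def εv {n : ℕ} (i : Fin n) : E n := EuclideanSpace.single i 1

/-- The vector of `ℝ^n` with the given coordinates. -/
def vec {n : ℕ} (x : Fin n → ℝ) : E n := (WithLp.equiv 2 (Fin n → ℝ)).symm x

/-- The vector of `ℝ^n` with the given integer coordinates. -/
def intVec {n : ℕ} (x : Fin n → ℤ) : E n := (WithLp.equiv 2 (Fin n → ℝ)).symm fun i => (x i : ℝ)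

/-- A lattice is integral if all pairwise inner products of its elements are integers. -/
def LatticeIsIntegral {n : ℕ} (L : Submodule ℤ (E n)) : Prop :=
  ∀ x ∈ L, ∀ y ∈ L, ∃ k : ℤ, ⟪x, y⟫ = (k : ℝ)

/-- Two lattices are isometric if a linear isometry of the ambient space carries
one onto the other. -/
def IsometricLattices {n : ℕ} (L M : Submodule ℤ (E n)) : Prop :=
  ∃ g : E n ≃ₗᵢ[ℝ] E n, g '' (L : Set (E n)) = (M : Set (E n))

/-- The dual lattice `Λ♯ = {x : ⟪x,y⟫ ∈ ℤ for all y ∈ Λ}`. -/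
def dualLattice {n : ℕ} (Λ : Submodule ℤ (E n)) : Submodule ℤ (E n) where
  carrier := {x | ∀ y ∈ Λ, ∃ k : ℤ, ⟪x, y⟫ = (k : ℝ)}
  zero_mem' := fun y _ => ⟨0, by simp⟩
  add_mem' := by
    intro a b ha hb y hy
    obtain ⟨k, hk⟩ := ha y hy
    obtain ⟨l, hl⟩ := hb y hy
    exact ⟨k + l, by rw [inner_add_left, hk, hl]; push_cast; ring⟩
  smul_mem' := by
    intro c x hx y hy
    obtain ⟨k, hk⟩ := hx y hy
    refine ⟨c * k, ?_⟩
    rw [← Int.cast_smul_eq_zsmul ℝ c x, real_inner_smul_left, hk]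
    push_cast
    ring

/-- The quotient abelian group `Λ♯/Λ`. -/
abbrev DualQuot {n : ℕ} (Λ : Submodule ℤ (E n)) :=
  (dualLattice Λ) ⧸ (Λ.comap (dualLattice Λ).subtype)

/-- The coset `c ∈ Λ♯/Λ` has minimal norm `m`, i.e. `m` is the minimum of `‖x‖²`
over `x` in the coset `c`. -/
def CosetMinNorm {n : ℕ} (Λ : Submodule ℤ (E n)) (c : DualQuot Λ) (m : ℝ) : Prop :=
  IsLeast {r : ℝ | ∃ x : dualLattice Λ, Submodule.Quotient.mk x = c ∧ r = ‖(x : E n)‖ ^ 2} m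

/-- The Gram matrix of `Λ₆` (up to the factor 2). -/
def G6 : Matrix (Fin 6) (Fin 6) ℝ :=
  !![2, -1, 0, 0, 0, 0;
     -1, 2, -1, 0, 0, 0;
     0, -1, 2, -1, 0, -1;
     0, 0, -1, 2, -1, 0;
     0, 0, 0, -1, 2, 0;
     0, 0, -1, 0, 0, 2]

/-!
Let `G` be the Cartan matrix of `E₆`, and identify `x ∈ Λ♯` with the integer vector
`k = (⟪x, eᵢ⟫)ᵢ`. Then `Λ` corresponds to `2Gℤ⁶`, and `‖x‖² = kᵀ(2G)⁻¹k = Q(k) / 3` for an integral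
quadratic form `Q`. As `det G = 3`, the residues of `k` mod 2 and of a suitable functional `c ⬝ k`
mod 3 identify `Λ♯/Λ` with `(ℤ/2)⁶ × ℤ/3`. The residue of `Q(k)` mod 2 depends only on `k` mod 2,
and `Q(k) ≡ -(c ⬝ k)²` mod 3; together with positivity, and with `4 ∣ Q(k)` for even `k`, this
bounds the minimum of `Q` on each coset from below. The bound is always attained by some
`±w ± w'`, where `w` and `w'` run through the 27 minimal vectors of one nontrivial coset of `E₆`
in its dual.
-/

open Matrix

theorem exists_eq_nsmul_of_intCast_zmod_eq_zero {ι : Type*} {n : ℕ} {k : ι → ℤ}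
    (h : ∀ i, (k i : ZMod n) = 0) : ∃ a : ι → ℤ, k = n • a := by
  choose a ha using fun i => (ZMod.intCast_zmod_eq_zero_iff_dvd (k i) n).1 (h i)
  exact ⟨a, funext fun i => (ha i).trans (nsmul_eq_mul n (a i)).symm⟩

theorem addOrderOf_eq_ite_of_prime_nsmul_eq_zero {A : Type*} [AddMonoid A] [DecidableEq A] {p : ℕ}
    [Fact p.Prime] {x : A} (h : p • x = 0) : addOrderOf x = if x = 0 then 1 else p := by
  split_ifs with hx
  · exact AddMonoid.addOrderOf_eq_one_iff.2 hx
  · exact addOrderOf_eq_prime h hx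

section InnerProduct

variable {ι V : Type*} [Fintype ι] [NormedAddCommGroup V] [InnerProductSpace ℝ V] {e : ι → V}

theorem ext_inner_of_linearIndependent [FiniteDimensional ℝ V] (he : LinearIndependent ℝ e)
    (hcard : Fintype.card ι = Module.finrank ℝ V) {x y : V} (h : ∀ i, ⟪x, e i⟫ = ⟪y, e i⟫) :
    x = y :=
  InnerProductSpace.ext_inner_right_basis (basisOfLinearIndependentOfCardEqFinrank' e he hcard)
    (by simpa using h)

theorem exists_inner_eq [FiniteDimensional ℝ V] (he : LinearIndependent ℝ e)
    (hcard : Fintype.card ι = Module.finrank ℝ V) (a : ι → ℝ) : ∃ x : V, ∀ i, ⟪x, e i⟫ = a i := by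
  let f : V →ₗ[ℝ] ι → ℝ := LinearMap.pi fun i => (innerₗ V).flip (e i)
  have hf : Function.Injective f := fun x y hxy =>
    ext_inner_of_linearIndependent he hcard fun i => congrFun hxy i
  have finrank_eq : Module.finrank ℝ V = Module.finrank ℝ (ι → ℝ) := by
    rw [Module.finrank_fintype_fun_eq_card, hcard]
  obtain ⟨x, hx⟩ := (f.injective_iff_surjective_of_finrank_eq_finrank finrank_eq).1 hf a
  exact ⟨x, congrFun hx⟩

theorem inner_sum_smul_eq_mulVec {A : Matrix ι ι ℤ} (hA : ∀ i j, ⟪e i, e j⟫ = A i j) (m : ι → ℤ)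
    (i : ι) : ⟪∑ j, m j • e j, e i⟫ = (A *ᵥ m) i := by
  simp_rw [sum_inner, ← Int.cast_smul_eq_zsmul ℝ, real_inner_smul_left, real_inner_comm (e i), hA]
  simp [mulVec, dotProduct, mul_comm]

end InnerProduct

namespace dualLattice

variable {n : ℕ} {e : Fin n → E n}

/-- The integers `⟪x, e i⟫` attached to an element `x` of the dual of the lattice spanned by `e`:
its coordinates in the dual basis of `e`. -/
def coord (e : Fin n → E n) :
    dualLattice (Submodule.span ℤ (Set.range e)) →ₗ[ℤ] Fin n → ℤ :=
  have integral (x : dualLattice (Submodule.span ℤ (Set.range e))) (i : Fin n) :=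
    x.2 (e i) (Submodule.subset_span (Set.mem_range_self i))
  AddMonoidHom.toIntLinearMap <| AddMonoidHom.mk' (fun x i => (integral x i).choose) fun x y => by
    ext i
    have h := (integral (x + y) i).choose_spec
    have hadd : ⟪((x + y : dualLattice _) : E n), e i⟫ = ⟪(x : E n), e i⟫ + ⟪(y : E n), e i⟫ :=
      inner_add_left ..
    rw [(integral x i).choose_spec, (integral y i).choose_spec] at hadd
    exact_mod_cast h.symm.trans hadd

theorem inner_eq_coord (x : dualLattice (Submodule.span ℤ (Set.range e))) (i : Fin n) :
    ⟪(x : E n), e i⟫ = coord e x i :=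
  (x.2 (e i) (Submodule.subset_span (Set.mem_range_self i))).choose_spec

theorem mem_of_forall_inner_eq {x : E n} {k : Fin n → ℤ} (h : ∀ i, ⟪x, e i⟫ = k i) :
    x ∈ dualLattice (Submodule.span ℤ (Set.range e)) := by
  intro y hy
  obtain ⟨m, rfl⟩ := (Submodule.mem_span_range_iff_exists_fun ℤ).1 hy
  exact ⟨m ⬝ᵥ k, by simp [inner_sum, ← Int.cast_smul_eq_zsmul ℝ, real_inner_smul_right, h,
    dotProduct]⟩

theorem coord_surjective (he : LinearIndependent ℝ e) : Function.Surjective (coord e) := by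
  intro k
  obtain ⟨x, hx⟩ := exists_inner_eq he (by simp) fun i => (k i : ℝ)
  refine ⟨⟨x, mem_of_forall_inner_eq hx⟩, funext fun i => ?_⟩
  exact_mod_cast (inner_eq_coord ⟨x, mem_of_forall_inner_eq hx⟩ i).symm.trans (hx i)

section Gram

variable {A : Matrix (Fin n) (Fin n) ℤ}

theorem mem_span_iff_exists_mulVec_eq_coord (he : LinearIndependent ℝ e)
    (hA : ∀ i j, ⟪e i, e j⟫ = A i j) (x : dualLattice (Submodule.span ℤ (Set.range e))) :
    (x : E n) ∈ Submodule.span ℤ (Set.range e) ↔ ∃ m, A *ᵥ m = coord e x := by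
  rw [Submodule.mem_span_range_iff_exists_fun]
  refine exists_congr fun m => ⟨fun h => funext fun i => ?_, fun h => ?_⟩
  · exact_mod_cast (inner_sum_smul_eq_mulVec hA m i).symm.trans (h ▸ inner_eq_coord x i)
  · refine ext_inner_of_linearIndependent he (by simp) fun i => ?_
    rw [inner_sum_smul_eq_mulVec hA, inner_eq_coord, h]

theorem mul_norm_sq_eq_dotProduct_mulVec (he : LinearIndependent ℝ e)
    (hA : ∀ i j, ⟪e i, e j⟫ = A i j) {U : Matrix (Fin n) (Fin n) ℤ} {d : ℤ}
    (hU : A * (U + Uᵀ) = (2 * d) • 1) (x : dualLattice (Submodule.span ℤ (Set.range e))) :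
    d * ‖(x : E n)‖ ^ 2 = (coord e x ⬝ᵥ U *ᵥ coord e x : ℤ) := by
  set k := coord e x
  have expand : ∑ j, ((U + Uᵀ) *ᵥ k) j • e j = (2 * d) • (x : E n) :=
    ext_inner_of_linearIndependent he (by simp) fun i => by
      rw [inner_sum_smul_eq_mulVec hA, mulVec_mulVec, hU, smul_mulVec, one_mulVec,
        ← Int.cast_smul_eq_zsmul ℝ (2 * d) (x : E n), real_inner_smul_left, inner_eq_coord]
      exact Int.cast_mul _ _
  have pair : 2 * d * ‖(x : E n)‖ ^ 2 = (k ⬝ᵥ (U + Uᵀ) *ᵥ k : ℤ) := by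
    calc 2 * d * ‖(x : E n)‖ ^ 2
        = ⟪(x : E n), (2 * d) • (x : E n)⟫ := by
          rw [← Int.cast_smul_eq_zsmul ℝ, real_inner_smul_right, real_inner_self_eq_norm_sq]
          push_cast; rfl
      _ = (∑ j, ((U + Uᵀ) *ᵥ k) j * k j : ℤ) := by
          simp_rw [← expand, inner_sum, ← Int.cast_smul_eq_zsmul ℝ, real_inner_smul_right,
            inner_eq_coord]
          push_cast; rfl
      _ = (k ⬝ᵥ (U + Uᵀ) *ᵥ k : ℤ) := by rw [dotProduct_comm]; rfl
  have symm : k ⬝ᵥ (U + Uᵀ) *ᵥ k = 2 * (k ⬝ᵥ U *ᵥ k) := by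
    rw [add_mulVec, dotProduct_add, dotProduct_mulVec k Uᵀ, vecMul_transpose, dotProduct_comm _ k,
      two_mul]
  rw [symm] at pair
  push_cast at pair
  linarith

end Gram

end dualLattice

namespace Λ6

/-- The Cartan matrix of `E₆`, with the vertices of the Dynkin diagram ordered as in `G6`. -/
def cartan : Matrix (Fin 6) (Fin 6) ℤ :=
  !![2, -1, 0, 0, 0, 0;
     -1, 2, -1, 0, 0, 0;
     0, -1, 2, -1, 0, -1;
     0, 0, -1, 2, -1, 0;
     0, 0, 0, -1, 2, 0;
     0, 0, -1, 0, 0, 2]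

/-- The upper triangular matrix `U` with `U + Uᵀ = 3 G⁻¹`, for `G` the Cartan matrix of `E₆`.
It encodes `3 G⁻¹` as twice an integral quadratic form, which can then be reduced modulo 2. -/
def halfInv : Matrix (Fin 6) (Fin 6) ℤ :=
  !![2, 5, 6, 4, 2, 3;
     0, 5, 12, 8, 4, 6;
     0, 0, 9, 12, 6, 9;
     0, 0, 0, 5, 5, 6;
     0, 0, 0, 0, 2, 3;
     0, 0, 0, 0, 0, 3]

/-- The quadratic form `Q` on `ℤ⁶` such that `x ∈ Λ6♯` with coordinates `k` has `‖x‖² = Q k / 3`. -/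
def form (k : Fin 6 → ℤ) : ℤ := k ⬝ᵥ halfInv *ᵥ k

/-- The reduction modulo 2 of `form`. -/
def formMod2 (a : Fin 6 → ZMod 2) : ZMod 2 := a ⬝ᵥ halfInv.map (↑) *ᵥ a

/-- A vector `c` for which `k ↦ c ⬝ k` modulo 3 identifies `ℤ⁶ / Gℤ⁶` with `ℤ/3`. -/
def glue : Fin 6 → ℤ := ![1, -1, 0, 1, -1, 0]

/-- A model of the group `Λ6♯/Λ6`, recording `k` modulo 2 and `glue ⬝ k` modulo 3. -/
abbrev ResidueGroup := (Fin 6 → ZMod 2) × ZMod 3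

/-- The class in `Λ6♯/Λ6` of the vector with coordinates `k`. -/
def residue : (Fin 6 → ℤ) →ₗ[ℤ] ResidueGroup :=
  AddMonoidHom.toIntLinearMap <|
    AddMonoidHom.mk' (fun k => (fun i => (k i : ZMod 2), ((glue ⬝ᵥ k : ℤ) : ZMod 3))) fun k l => by
      ext <;> simp [dotProduct_add]

theorem residue_apply (k : Fin 6 → ℤ) :
    residue k = (fun i => (k i : ZMod 2), ((glue ⬝ᵥ k : ℤ) : ZMod 3)) := rfl

theorem cartan_mul_halfInv_add_transpose :
    2 • cartan * (halfInv + halfInvᵀ) = (2 * 3 : ℤ) • 1 := by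
  decide +kernel

theorem exists_cartan_mul_eq_one_sub_vecMulVec_glue :
    ∃ M, cartan * M = 1 - vecMulVec glue glue :=
  ⟨!![1, 2, 2, 1, 1, 1;
      2, 3, 4, 3, 1, 2;
      2, 4, 6, 4, 2, 3;
      1, 3, 4, 3, 2, 2;
      1, 1, 2, 2, 1, 1;
      1, 2, 3, 2, 1, 2], by decide +kernel⟩

theorem cartan_mulVec_glue : cartan *ᵥ glue = 3 • glue := by decide

theorem glue_vecMul_cartan : glue ᵥ* cartan = 3 • glue := by decide

theorem residue_eq_zero_iff (k : Fin 6 → ℤ) :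
    residue k = 0 ↔ ∃ m, (2 • cartan) *ᵥ m = k := by
  rw [residue_apply, Prod.mk_eq_zero]
  constructor
  · rintro ⟨h2, h3⟩
    obtain ⟨a, rfl⟩ := exists_eq_nsmul_of_intCast_zmod_eq_zero (congrFun h2)
    obtain ⟨t, ht⟩ : 3 ∣ glue ⬝ᵥ a := by
      have := (ZMod.intCast_zmod_eq_zero_iff_dvd _ 3).1 h3
      rw [dotProduct_smul, nsmul_eq_mul] at this
      omega
    obtain ⟨M, hM⟩ := exists_cartan_mul_eq_one_sub_vecMulVec_glue
    refine ⟨t • glue + M *ᵥ a, ?_⟩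
    have : cartan *ᵥ (t • glue + M *ᵥ a) = a := by
      rw [mulVec_add, mulVec_smul, cartan_mulVec_glue, mulVec_mulVec, hM, sub_mulVec, one_mulVec,
        vecMulVec_mulVec, ht, op_smul_eq_smul]
      module
    rw [smul_mulVec, this]
  · rintro ⟨m, rfl⟩
    have hglue : glue ⬝ᵥ (2 • cartan) *ᵥ m = 3 * (2 * (glue ⬝ᵥ m)) := by
      rw [smul_mulVec, dotProduct_smul, dotProduct_mulVec, glue_vecMul_cartan, smul_dotProduct]
      ring
    refine ⟨funext fun i => ?_, ?_⟩
    · rw [smul_mulVec, Pi.smul_apply, nsmul_eq_mul, Int.cast_mul]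
      exact mul_eq_zero_of_left rfl _
    · rw [hglue, ZMod.intCast_zmod_eq_zero_iff_dvd]
      exact dvd_mul_right _ _

theorem four_mul_form (k : Fin 6 → ℤ) :
    4 * form k = (2 * k 0 + 4 * k 1 + 6 * k 2 + 4 * k 3 + 2 * k 4 + 3 * k 5) ^ 2
      + (k 0 + 2 * k 1) ^ 2 + (2 * k 3 + k 4) ^ 2 + 3 * (k 0 ^ 2 + k 4 ^ 2 + k 5 ^ 2) := by
  simp only [form, dotProduct, mulVec, halfInv, of_apply, cons_val', cons_val_fin_one,
    Fin.sum_univ_six, Fin.isValue, cons_val_zero, cons_val_one, cons_val]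
  ring

theorem form_nonneg (k : Fin 6 → ℤ) : 0 ≤ form k := by
  have := four_mul_form k
  have : 0 ≤ 4 * form k := by rw [this]; positivity
  linarith

theorem form_eq_zero_iff {k : Fin 6 → ℤ} : form k = 0 ↔ k = 0 := by
  refine ⟨fun h => ?_, fun h => by simp [h, form]⟩
  have hsum := four_mul_form k
  rw [h] at hsum
  have h0 : k 0 = 0 := by rw [← sq_eq_zero_iff]; nlinarith
  have h4 : k 4 = 0 := by rw [← sq_eq_zero_iff]; nlinarith
  have h5 : k 5 = 0 := by rw [← sq_eq_zero_iff]; nlinarith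
  have h1 : k 0 + 2 * k 1 = 0 := by rw [← sq_eq_zero_iff]; nlinarith
  have h3 : 2 * k 3 + k 4 = 0 := by rw [← sq_eq_zero_iff]; nlinarith
  have h2 : 2 * k 0 + 4 * k 1 + 6 * k 2 + 4 * k 3 + 2 * k 4 + 3 * k 5 = 0 := by
    rw [← sq_eq_zero_iff]; nlinarith
  ext i
  fin_cases i <;> simp <;> omega

theorem four_dvd_form {k : Fin 6 → ℤ} (h : (residue k).1 = 0) : 4 ∣ form k := by
  obtain ⟨a, rfl⟩ := exists_eq_nsmul_of_intCast_zmod_eq_zero (congrFun h)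
  refine ⟨form a, ?_⟩
  rw [form, mulVec_smul, smul_dotProduct, dotProduct_smul, smul_smul, nsmul_eq_mul]
  rfl

theorem cast_form_two (k : Fin 6 → ℤ) : (form k : ZMod 2) = formMod2 (residue k).1 := by
  refine ((Int.castRingHom (ZMod 2)).map_dotProduct k (halfInv *ᵥ k)).trans ?_
  congr 1
  exact funext fun i => (Int.castRingHom (ZMod 2)).map_mulVec halfInv k i

theorem even_form_iff (k : Fin 6 → ℤ) : Even (form k) ↔ formMod2 (residue k).1 = 0 := by
  rw [← cast_form_two, ZMod.intCast_eq_zero_iff_even]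

theorem three_dvd_form_add_sq (k : Fin 6 → ℤ) : 3 ∣ form k + (glue ⬝ᵥ k) ^ 2 := by
  refine ⟨k 0 * (k 0 + k 1 + 2 * k 2 + 2 * k 3 + k 5)
    + k 1 * (2 * k 1 + 4 * k 2 + 2 * k 3 + 2 * k 4 + 2 * k 5)
    + k 2 * (3 * k 2 + 4 * k 3 + 2 * k 4 + 3 * k 5)
    + k 3 * (2 * k 3 + k 4 + 2 * k 5) + k 4 * (k 4 + k 5) + k 5 ^ 2, ?_⟩
  simp only [form, dotProduct, mulVec, halfInv, glue, of_apply, cons_val', cons_val_fin_one,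
    Fin.sum_univ_six, Fin.isValue, cons_val_zero, cons_val_one, cons_val]
  ring

theorem form_emod_three (k : Fin 6 → ℤ) : form k % 3 = if (residue k).2 = 0 then 0 else 2 := by
  have hdvd := three_dvd_form_add_sq k
  have hzero : (residue k).2 = 0 ↔ 3 ∣ glue ⬝ᵥ k := ZMod.intCast_zmod_eq_zero_iff_dvd _ 3
  have hsq : (glue ⬝ᵥ k) ^ 2 % 3 = if 3 ∣ glue ⬝ᵥ k then 0 else 1 := by
    rcases (by omega : (glue ⬝ᵥ k) % 3 = 0 ∨ (glue ⬝ᵥ k) % 3 = 1 ∨ (glue ⬝ᵥ k) % 3 = 2) with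
      h | h | h <;> simp [pow_two, Int.mul_emod, Int.dvd_iff_emod_eq_zero, h]
  simp only [hzero]
  split_ifs at hsq ⊢ <;> omega

/-- The minimum of `form` on a class of `ℤ⁶` modulo `2Gℤ⁶`, given as the least value compatible with
positivity and with the residues of `form` modulo 2, 3 and, on even vectors, 4. -/
def minForm (t : ResidueGroup) : ℤ :=
  if t.1 = 0 then
    if t.2 = 0 then 0 else 8
  else if formMod2 t.1 = 0 then
    if t.2 = 0 then 6 else 2
  else
    if t.2 = 0 then 3 else 5

/-- The 27 vectors `k` with `form k = 2` and `glue ⬝ k ≡ 1` modulo 3. They are the weights of a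
minuscule representation of `E₆`, in coordinates with respect to the fundamental weights. -/
def minusculeWeight : Fin 27 → Fin 6 → ℤ :=
  ![![1, 0, 0, 0, 0, 0], ![1, 0, 0, 0, 0, -1], ![1, 0, -1, 0, 0, 1],
    ![1, -1, 1, -1, 0, 0], ![1, -1, 0, 1, -1, 0], ![1, -1, 0, 0, 1, 0],
    ![0, 1, 0, -1, 0, 0], ![0, 1, -1, 1, -1, 0], ![0, 1, -1, 0, 1, 0],
    ![0, 0, 1, 0, -1, -1], ![0, 0, 1, -1, 1, -1], ![0, 0, 0, 1, 0, -1],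
    ![0, 0, 0, 0, -1, 1], ![0, 0, 0, 0, -1, 0], ![0, 0, 0, -1, 1, 1],
    ![0, 0, 0, -1, 1, 0], ![0, 0, -1, 1, 0, 1], ![0, 0, -1, 1, 0, 0],
    ![0, -1, 1, 0, 0, 0], ![0, -1, 1, 0, 0, -1], ![0, -1, 0, 0, 0, 1],
    ![-1, 1, 0, 0, 0, 0], ![-1, 1, 0, 0, 0, -1], ![-1, 1, -1, 0, 0, 1],
    ![-1, 0, 1, -1, 0, 0], ![-1, 0, 0, 1, -1, 0], ![-1, 0, 0, 0, 1, 0]]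

theorem minForm_residue_le (k : Fin 6 → ℤ) : minForm (residue k) ≤ form k := by
  have nonneg := form_nonneg k
  have mod_three := form_emod_three k
  have parity := even_form_iff k
  rw [Int.even_iff] at parity
  have pos (h : (residue k).1 ≠ 0) : form k ≠ 0 := fun h0 => h <| by
    rw [form_eq_zero_iff.1 h0, map_zero, Prod.fst_zero]
  have dvd (h : (residue k).1 = 0) : 4 ∣ form k := four_dvd_form h
  unfold minForm
  split_ifs at mod_three ⊢ <;> grind

theorem exists_minusculeWeight_combination (t : ResidueGroup) :
    ∃ i j, ∃ k ∈ [minusculeWeight i - minusculeWeight j, minusculeWeight i + minusculeWeight j,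
      -minusculeWeight i - minusculeWeight j], residue k = t ∧ form k = minForm t := by
  revert t
  decide +kernel

theorem isLeast_minForm (t : ResidueGroup) : IsLeast (form '' (residue ⁻¹' {t})) (minForm t) := by
  refine ⟨?_, ?_⟩
  · obtain ⟨-, -, k, -, hk, hform⟩ := exists_minusculeWeight_combination t
    exact ⟨k, hk, hform⟩
  · rintro _ ⟨k, rfl, rfl⟩
    exact minForm_residue_le k

theorem residue_surjective : Function.Surjective residue := fun t =>
  have ⟨k, hk, _⟩ := (isLeast_minForm t).1
  ⟨k, hk⟩

theorem addOrderOf_residueGroup (t : ResidueGroup) :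
    addOrderOf t = Nat.lcm (if t.1 = 0 then 1 else 2) (if t.2 = 0 then 1 else 3) := by
  rw [Prod.addOrderOf, addOrderOf_eq_ite_of_prime_nsmul_eq_zero (p := 2) (CharTwo.two_nsmul _),
    addOrderOf_eq_ite_of_prime_nsmul_eq_zero (p := 3) (ZModModule.char_nsmul_eq_zero 3 _)]

theorem minForm_and_addOrderOf_cases (t : ResidueGroup) : t = 0 ∨
    (minForm t = 2 ∧ addOrderOf t = 6) ∨ (minForm t = 3 ∧ addOrderOf t = 2) ∨
    (minForm t = 5 ∧ addOrderOf t = 6) ∨ (minForm t = 6 ∧ addOrderOf t = 2) ∨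
    (minForm t = 8 ∧ addOrderOf t = 3) := by
  rw [addOrderOf_residueGroup, minForm, Prod.ext_iff]
  split_ifs <;> simp_all [Nat.lcm]

theorem ncard_minForm_and_addOrderOf_eq_card (q : ℤ) (n : ℕ) :
    {t | minForm t = q ∧ addOrderOf t = n}.ncard = ({t | minForm t = q ∧
      Nat.lcm (if t.1 = 0 then 1 else 2) (if t.2 = 0 then 1 else 3) = n} : Finset _).card := by
  simp only [addOrderOf_residueGroup, ← Set.ncard_coe_finset, Finset.coe_filter_univ]

theorem ncard_minForm_and_addOrderOf :
    {t | minForm t = 2 ∧ addOrderOf t = 6}.ncard = 54 ∧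
    {t | minForm t = 3 ∧ addOrderOf t = 2}.ncard = 36 ∧
    {t | minForm t = 5 ∧ addOrderOf t = 6}.ncard = 72 ∧
    {t | minForm t = 6 ∧ addOrderOf t = 2}.ncard = 27 ∧
    {t | minForm t = 8 ∧ addOrderOf t = 3}.ncard = 2 := by
  simp only [ncard_minForm_and_addOrderOf_eq_card]
  decide +kernel

section Lattice

variable {e : Fin 6 → E 6}

theorem inner_eq_two_smul_cartan (hGram : ∀ i j, ⟪e i, e j⟫ = 2 * G6 i j) (i j : Fin 6) :
    ⟪e i, e j⟫ = ((2 • cartan) i j : ℤ) := by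
  rw [hGram]
  fin_cases i <;> fin_cases j <;> norm_num [G6, cartan]

theorem norm_sq_eq_form_div_three (he : LinearIndependent ℝ e)
    (hGram : ∀ i j, ⟪e i, e j⟫ = 2 * G6 i j) (x : dualLattice (Submodule.span ℤ (Set.range e))) :
    ‖(x : E 6)‖ ^ 2 = form (dualLattice.coord e x) / 3 := by
  have := dualLattice.mul_norm_sq_eq_dotProduct_mulVec he (inner_eq_two_smul_cartan hGram)
    cartan_mul_halfInv_add_transpose x
  rw [form, ← this]
  push_cast
  ring

theorem comap_span_eq_ker (he : LinearIndependent ℝ e) (hGram : ∀ i j, ⟪e i, e j⟫ = 2 * G6 i j) :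
    (Submodule.span ℤ (Set.range e)).comap (dualLattice _).subtype =
      LinearMap.ker (residue ∘ₗ dualLattice.coord e) := by
  ext x
  rw [LinearMap.mem_ker, LinearMap.comp_apply, residue_eq_zero_iff,
    ← dualLattice.mem_span_iff_exists_mulVec_eq_coord he (inner_eq_two_smul_cartan hGram)]
  rfl

/-- The isomorphism `Λ6♯/Λ6 ≃ (ℤ/2)⁶ × ℤ/3` induced by `residue`. -/
def quotEquiv (he : LinearIndependent ℝ e) (hGram : ∀ i j, ⟪e i, e j⟫ = 2 * G6 i j) :
    DualQuot (Submodule.span ℤ (Set.range e)) ≃ₗ[ℤ] ResidueGroup :=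
  (Submodule.quotEquivOfEq _ _ (comap_span_eq_ker he hGram)).trans <|
    LinearMap.quotKerEquivOfSurjective (residue ∘ₗ dualLattice.coord e) <|
      residue_surjective.comp (dualLattice.coord_surjective he)

theorem quotEquiv_mk (he : LinearIndependent ℝ e) (hGram : ∀ i j, ⟪e i, e j⟫ = 2 * G6 i j)
    (x : dualLattice (Submodule.span ℤ (Set.range e))) :
    quotEquiv he hGram (Submodule.Quotient.mk x) = residue (dualLattice.coord e x) := rfl

theorem cosetMinNorm_minForm_div_three (he : LinearIndependent ℝ e)
    (hGram : ∀ i j, ⟪e i, e j⟫ = 2 * G6 i j) (c : DualQuot (Submodule.span ℤ (Set.range e))) :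
    CosetMinNorm _ c (minForm (quotEquiv he hGram c) / 3) := by
  obtain ⟨⟨k, hk, hform⟩, least⟩ := isLeast_minForm (quotEquiv he hGram c)
  refine ⟨?_, ?_⟩
  · obtain ⟨x, rfl⟩ := dualLattice.coord_surjective he k
    refine ⟨x, (quotEquiv he hGram).injective ((quotEquiv_mk he hGram x).trans hk), ?_⟩
    rw [norm_sq_eq_form_div_three he hGram, hform]
  · rintro _ ⟨x, rfl, rfl⟩
    rw [norm_sq_eq_form_div_three he hGram]
    gcongr
    exact least ⟨_, (quotEquiv_mk he hGram x).symm, rfl⟩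

theorem cosetMinNorm_and_addOrderOf_iff (he : LinearIndependent ℝ e)
    (hGram : ∀ i j, ⟪e i, e j⟫ = 2 * G6 i j) (m : ℝ) (q : ℤ) (hm : m = q / 3) (n : ℕ)
    (c : DualQuot (Submodule.span ℤ (Set.range e))) :
    CosetMinNorm _ c m ∧ addOrderOf c = n ↔
      minForm (quotEquiv he hGram c) = q ∧ addOrderOf (quotEquiv he hGram c) = n := by
  have least := cosetMinNorm_minForm_div_three he hGram c
  have min_iff : CosetMinNorm _ c m ↔ minForm (quotEquiv he hGram c) = q := by
    refine ⟨fun h => ?_, fun h => by rwa [hm, ← h]⟩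
    have eq_div := least.unique h
    rw [hm, div_left_inj' three_ne_zero] at eq_div
    exact_mod_cast eq_div
  rw [min_iff, ← (quotEquiv he hGram).toAddEquiv.addOrderOf_eq c]
  rfl

theorem ncard_cosetMinNorm_and_addOrderOf (he : LinearIndependent ℝ e)
    (hGram : ∀ i j, ⟪e i, e j⟫ = 2 * G6 i j) (m : ℝ) (q : ℤ) (hm : m = q / 3) (n : ℕ) :
    {c : DualQuot (Submodule.span ℤ (Set.range e)) | CosetMinNorm _ c m ∧ addOrderOf c = n}.ncard =
      {t | minForm t = q ∧ addOrderOf t = n}.ncard := by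
  simp only [cosetMinNorm_and_addOrderOf_iff he hGram m q hm]
  exact Set.ncard_preimage_of_injective_subset_range
    (s := {t | minForm t = q ∧ addOrderOf t = n}) (quotEquiv he hGram).injective
    fun t _ => (quotEquiv he hGram).surjective t

end Lattice

end Λ6

/-- If `e1, …, e6` are linearly independent with Gram matrix `2·G6`, and `Λ₆` is their
ℤ-span, then the quotient `Λ₆♯/Λ₆` has exactly 192 elements: the zero coset,
54 cosets of minimal norm 2/3 and order 6, 36 cosets of minimal norm 1 and order 2,
72 cosets of minimal norm 5/3 and order 6, 27 cosets of minimal norm 2 and order 2,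
and 2 cosets of minimal norm 8/3 and order 3. -/
theorem Λ6_dual_quotient_classes (e : Fin 6 → E 6)
    (he : LinearIndependent ℝ e)
    (hGram : ∀ i j, ⟪e i, e j⟫ = 2 * G6 i j) :
    Nat.card (DualQuot (Submodule.span ℤ (Set.range e))) = 192 ∧
    (∀ c : DualQuot (Submodule.span ℤ (Set.range e)), c = 0 ∨
      (CosetMinNorm _ c (2/3) ∧ addOrderOf c = 6) ∨
      (CosetMinNorm _ c 1 ∧ addOrderOf c = 2) ∨
      (CosetMinNorm _ c (5/3) ∧ addOrderOf c = 6) ∨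
      (CosetMinNorm _ c 2 ∧ addOrderOf c = 2) ∨
      (CosetMinNorm _ c (8/3) ∧ addOrderOf c = 3)) ∧
    {c : DualQuot (Submodule.span ℤ (Set.range e)) |
      CosetMinNorm _ c (2/3) ∧ addOrderOf c = 6}.ncard = 54 ∧
    {c : DualQuot (Submodule.span ℤ (Set.range e)) |
      CosetMinNorm _ c 1 ∧ addOrderOf c = 2}.ncard = 36 ∧
    {c : DualQuot (Submodule.span ℤ (Set.range e)) |
      CosetMinNorm _ c (5/3) ∧ addOrderOf c = 6}.ncard = 72 ∧
    {c : DualQuot (Submodule.span ℤ (Set.range e)) |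
      CosetMinNorm _ c 2 ∧ addOrderOf c = 2}.ncard = 27 ∧
    {c : DualQuot (Submodule.span ℤ (Set.range e)) |
      CosetMinNorm _ c (8/3) ∧ addOrderOf c = 3}.ncard = 2 := by
  have class_iff := Λ6.cosetMinNorm_and_addOrderOf_iff he hGram
  have ncard_eq := Λ6.ncard_cosetMinNorm_and_addOrderOf he hGram
  refine ⟨?_, fun c => ?_, ?_⟩
  · rw [Nat.card_congr (Λ6.quotEquiv he hGram).toEquiv]
    simp
  · rw [class_iff (2 / 3) 2 (by norm_num), class_iff 1 3 (by norm_num),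
      class_iff (5 / 3) 5 (by norm_num), class_iff 2 6 (by norm_num),
      class_iff (8 / 3) 8 (by norm_num), ← (Λ6.quotEquiv he hGram).map_eq_zero_iff]
    exact Λ6.minForm_and_addOrderOf_cases _
  · rw [ncard_eq (2 / 3) 2 (by norm_num), ncard_eq 1 3 (by norm_num),
      ncard_eq (5 / 3) 5 (by norm_num), ncard_eq 2 6 (by norm_num),
      ncard_eq (8 / 3) 8 (by norm_num)]
    exact Λ6.ncard_minForm_and_addOrderOf
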